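/- The map n ↦ s_n is a bijection from ℕ onto the set of nonnegative rational numbers: every q ∈ ℚ with q ≥ 0 equals s_n for exactly one n ∈ ℕ. -/

import Mathlib

/-!
The recurrence is self-similar: with `x = s n`, the five consecutive terms `s (5 * n + k)`,
`k = 0, …, 4`, are the images of `x` under the Möbius maps `branch k` (`s_five_mul_add`). This rests
on the fact that the map `x ↦ 1 / (3 * (1 - x))` takes `branch k x` to `branch (k + 1) x` for `k < 4`, while
at multiples of five `padicValNat 5 (5 * n) = 1 + padicValNat 5 n`, and `branch 0` adds `3` to `1/x`.
The denominators never vanish because `s n < 1 + 2 * padicValNat 5 (n + 1)`, which is proved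
in the same induction (`s_aux`).

On the nonnegative rationals the five branches are injective, with images
`[0, 1/3)`, `[1/3, 1/2)`, `[1/2, 2/3)`, `[2/3, 1)`, `[1, ∞)`, which partition `[0, ∞)`. So the value
`s n` determines the last base-`5` digit of `n` and the value `s (n / 5)`, and injectivity follows by
induction. For surjectivity, undoing the branch that produces a positive fraction `a / b` gives a
fraction with smaller numerator-plus-denominator (`exists_branch_eq`), so the descent reaches `0`.
-/

/-- The Möbius map taking `s n` to `s (5 * n + k)`, for each base-`5` digit `k`. -/
def branch (k : Fin 5) (x : ℚ) : ℚ :=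
  match k with
  | 0 => x / (1 + 3 * x)
  | 1 => (1 + 3 * x) / (3 * (1 + 2 * x))
  | 2 => (1 + 2 * x) / (2 + 3 * x)
  | 3 => (2 + 3 * x) / (3 * (1 + x))
  | 4 => 1 + x

/-- The images of `[0, ∞)` under the branches are disjoint and ordered by digit. -/
lemma branch_lt_branch {i j : Fin 5} (hij : i < j) {x y : ℚ} (hx : 0 ≤ x) (hy : 0 ≤ y) :
    branch i x < branch j y := by
  have hxy := mul_nonneg hx hy
  fin_cases i <;> fin_cases j <;> first
    | exact absurd hij (by decide)
    | (simp only [branch]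
       first
         | (rw [div_lt_div_iff₀ (by positivity) (by positivity)]; nlinarith)
         | (rw [div_lt_iff₀ (by positivity)]; nlinarith))

lemma branch_injective (k : Fin 5) {x y : ℚ} (hx : 0 ≤ x) (hy : 0 ≤ y)
    (h : branch k x = branch k y) : x = y := by
  fin_cases k <;> simp only [branch] at h <;> first
    | linarith
    | (rw [div_eq_div_iff (by positivity) (by positivity)] at h; linarith)

lemma branch_eq_branch {i j : Fin 5} {x y : ℚ} (hx : 0 ≤ x) (hy : 0 ≤ y)
    (h : branch i x = branch j y) : i = j ∧ x = y := by
  rcases lt_trichotomy i j with hij | rfl | hij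
  · exact absurd h (branch_lt_branch hij hx hy).ne
  · exact ⟨rfl, branch_injective i hx hy h⟩
  · exact absurd h (branch_lt_branch hij hy hx).ne'

/-- The descent step: a positive fraction `a / b` is the image under some branch of a nonnegative
fraction with smaller sum of numerator and denominator. Neither fraction need be reduced. -/
lemma exists_branch_eq (a b : ℕ) (ha : 0 < a) (hb : 0 < b) :
    ∃ (k : Fin 5) (c d : ℕ), 0 < d ∧ c + d < a + b ∧ branch k ((c : ℚ) / d) = (a : ℚ) / b := by
  -- In each interval, the preimage is the inverse Möbius map applied to the pair `(a, b)`.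
  rcases lt_or_ge (3 * a) b with h0 | h0
  · obtain ⟨d, rfl⟩ := Nat.exists_eq_add_of_lt h0
    refine ⟨0, a, d + 1, by omega, by omega, ?_⟩
    simp only [branch]; push_cast; field_simp; ring
  rcases lt_or_ge (2 * a) b with h1 | h1
  · obtain ⟨c, d, hd, rfl, rfl⟩ : ∃ c d, 0 < d ∧ a = c + d ∧ b = 2 * c + 3 * d :=
      ⟨3 * a - b, b - 2 * a, by omega, by omega, by omega⟩
    refine ⟨1, c, 3 * d, by omega, by omega, ?_⟩
    simp only [branch]; push_cast; field_simp; ring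
  rcases lt_or_ge (3 * a) (2 * b) with h2 | h2
  · obtain ⟨c, d, hd, rfl, rfl⟩ : ∃ c d, 0 < d ∧ a = 2 * c + d ∧ b = 3 * c + 2 * d :=
      ⟨2 * a - b, 2 * b - 3 * a, by omega, by omega, by omega⟩
    refine ⟨2, c, d, by omega, by omega, ?_⟩
    simp only [branch]; push_cast; field_simp; ring
  rcases lt_or_ge a b with h3 | h3
  · obtain ⟨c, d, hd, rfl, rfl⟩ : ∃ c d, 0 < d ∧ a = c + 2 * d ∧ b = c + 3 * d :=
      ⟨3 * a - 2 * b, b - a, by omega, by omega, by omega⟩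
    refine ⟨3, c, 3 * d, by omega, by omega, ?_⟩
    simp only [branch]; push_cast; field_simp; ring
  · obtain ⟨c, rfl⟩ := Nat.exists_eq_add_of_le h3
    refine ⟨4, c, b, by omega, by omega, ?_⟩
    simp only [branch]; push_cast; field_simp

section Recurrence

variable {s : ℕ → ℚ}

/-- Once the term at `5 * n` is known, the four following ones are found by iterating
`x ↦ 1 / (3 * (1 - x))`, as the valuation vanishes there. -/
lemma s_block (hs : ∀ n : ℕ, 1 ≤ n →
      s n = 1 / (3 * (1 + 2 * (padicValNat 5 n : ℚ) - s (n - 1))))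
    {n : ℕ} (hn : 0 ≤ s n) (h0 : s (5 * n) = branch 0 (s n)) (k : Fin 5) :
    s (5 * n + k) = branch k (s n) := by
  have step (m : ℕ) (hm : ¬ 5 ∣ m + 1) : s (m + 1) = 1 / (3 * (1 - s m)) := by
    rw [hs (m + 1) (by omega), padicValNat.eq_zero_of_not_dvd hm]
    simp
  simp only [branch] at h0
  have h1 : s (5 * n + 1) = branch 1 (s n) := by
    have e : 1 - s n / (1 + 3 * s n) = (1 + 2 * s n) / (1 + 3 * s n) := by field_simp; ring
    rw [step _ (by omega), h0, e]; simp only [branch]; field_simp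
  have h2 : s (5 * n + 2) = branch 2 (s n) := by
    have e : 1 - branch 1 (s n) = (2 + 3 * s n) / (3 * (1 + 2 * s n)) := by
      simp only [branch]; field_simp; ring
    rw [step _ (by omega), h1, e]; simp only [branch]; field_simp
  have h3 : s (5 * n + 3) = branch 3 (s n) := by
    have e : 1 - branch 2 (s n) = (1 + s n) / (2 + 3 * s n) := by
      simp only [branch]; field_simp; ring
    rw [step _ (by omega), h2, e]; simp only [branch]; field_simp
  have h4 : s (5 * n + 4) = branch 4 (s n) := by
    have e : 1 - branch 3 (s n) = 1 / (3 * (1 + s n)) := by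
      simp only [branch]; field_simp; ring
    rw [step _ (by omega), h3, e]; simp only [branch]; field_simp
  fin_cases k
  exacts [h0, h1, h2, h3, h4]

lemma padicValNat_five_mul_succ (n : ℕ) :
    padicValNat 5 (5 * (n + 1)) = 1 + padicValNat 5 (n + 1) := by
  have : Fact (Nat.Prime 5) := ⟨by norm_num⟩
  rw [padicValNat.mul (by norm_num) (by omega), padicValNat_self]

/-- The upper bound says that the denominator in the recurrence for `s (n + 1)` is positive. Passing
to `s (5 * (n + 1))` needs this bound at `n`, and the bound at `5 * n + k` needs the formula for the
block of `n`, so the three facts are proved together. -/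
lemma s_aux (hs0 : s 0 = 0) (hs : ∀ n : ℕ, 1 ≤ n →
      s n = 1 / (3 * (1 + 2 * (padicValNat 5 n : ℚ) - s (n - 1)))) (n : ℕ) :
    0 ≤ s n ∧ s (5 * n) = branch 0 (s n) ∧ s n < 1 + 2 * (padicValNat 5 (n + 1) : ℚ) := by
  induction n using Nat.strong_induction_on with
  | _ n ih =>
    rcases n with _ | m
    · simp [hs0, branch]
    obtain ⟨hm, hm0, hmlt⟩ := ih m (by omega)
    have hrec := hs (m + 1) (by omega)
    rw [Nat.add_sub_cancel] at hrec
    have hpos : 0 < 1 + 2 * (padicValNat 5 (m + 1) : ℚ) - s m := by linarith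
    refine ⟨by rw [hrec]; positivity, ?_, ?_⟩
    · have h4 : s (5 * m + 4) = 1 + s m := s_block hs hm hm0 4
      rw [hs _ (by omega), show 5 * (m + 1) - 1 = 5 * m + 4 by omega, h4,
        padicValNat_five_mul_succ, hrec]
      generalize hv : 1 + 2 * (padicValNat 5 (m + 1) : ℚ) - s m = t at hpos
      have e : 1 + 2 * ((1 + padicValNat 5 (m + 1) : ℕ) : ℚ) - (1 + s m) = 1 + t := by
        rw [← hv]; push_cast; ring
      rw [e]; simp only [branch]; field_simp; ring
    · obtain ⟨hj, hj0, hjlt⟩ := ih ((m + 1) / 5) (by omega)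
      generalize hjdef : (m + 1) / 5 = j at hj hj0 hjlt
      have hblock := s_block hs hj hj0
      rcases Nat.lt_or_ge ((m + 1) % 5) 4 with hk | hk
      · have hlt := branch_lt_branch (i := ⟨(m + 1) % 5, by omega⟩) (j := 4)
          (by simpa [Fin.lt_def] using hk) hj le_rfl
        rw [← hblock, show 5 * j + ((⟨(m + 1) % 5, by omega⟩ : Fin 5) : ℕ) = m + 1 by
          simp only; omega] at hlt
        have : (0 : ℚ) ≤ padicValNat 5 (m + 1 + 1) := by positivity
        simp only [branch] at hlt
        linarith
      · have h4 : s (5 * j + 4) = 1 + s j := hblock 4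
        rw [show m + 1 + 1 = 5 * (j + 1) by omega, show m + 1 = 5 * j + 4 by omega, h4,
          padicValNat_five_mul_succ]
        push_cast
        linarith

lemma s_five_mul_add (hs0 : s 0 = 0) (hs : ∀ n : ℕ, 1 ≤ n →
      s n = 1 / (3 * (1 + 2 * (padicValNat 5 n : ℚ) - s (n - 1)))) (n : ℕ) (k : Fin 5) :
    s (5 * n + k) = branch k (s n) :=
  s_block hs (s_aux hs0 hs n).1 (s_aux hs0 hs n).2.1 k

lemma s_injective (hs0 : s 0 = 0) (hs : ∀ n : ℕ, 1 ≤ n →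
      s n = 1 / (3 * (1 + 2 * (padicValNat 5 n : ℚ) - s (n - 1)))) :
    ∀ N n m : ℕ, n + m = N → s n = s m → n = m := by
  intro N
  induction N using Nat.strong_induction_on with
  | _ N ih =>
    intro n m hN h
    rcases Nat.eq_zero_or_pos N with h0 | h0
    · omega
    have key (n : ℕ) : s n = branch ⟨n % 5, Nat.mod_lt _ (by norm_num)⟩ (s (n / 5)) := by
      rw [← s_five_mul_add hs0 hs, Nat.div_add_mod]
    rw [key n, key m] at h
    obtain ⟨hk, hx⟩ := branch_eq_branch (s_aux hs0 hs _).1 (s_aux hs0 hs _).1 h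
    have hk' : n % 5 = m % 5 := congrArg Fin.val hk
    have := ih (n / 5 + m / 5) (by omega) _ _ rfl hx
    omega

lemma exists_s_eq (hs0 : s 0 = 0) (hs : ∀ n : ℕ, 1 ≤ n →
      s n = 1 / (3 * (1 + 2 * (padicValNat 5 n : ℚ) - s (n - 1)))) :
    ∀ N a b : ℕ, a + b = N → 0 < b → ∃ n, s n = (a : ℚ) / b := by
  intro N
  induction N using Nat.strong_induction_on with
  | _ N ih =>
    intro a b hN hb
    rcases Nat.eq_zero_or_pos a with rfl | ha
    · exact ⟨0, by simp [hs0]⟩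
    obtain ⟨k, c, d, hd, hlt, hbr⟩ := exists_branch_eq a b ha hb
    obtain ⟨n, hn⟩ := ih (c + d) (by omega) c d rfl hd
    exact ⟨5 * n + k, by rw [s_five_mul_add hs0 hs, hn, hbr]⟩

end Recurrence

theorem s_enumerates_nonneg_rationals
    (s : ℕ → ℚ) (hs0 : s 0 = 0)
    (hs : ∀ n : ℕ, 1 ≤ n →
      s n = 1 / (3 * (1 + 2 * (padicValNat 5 n : ℚ) - s (n - 1)))) :
    ∀ q : ℚ, 0 ≤ q → ∃! n : ℕ, s n = q := by
  intro q hq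
  obtain ⟨n, hn⟩ := exists_s_eq hs0 hs _ q.num.toNat q.den rfl q.den_pos
  have hnum : ((q.num.toNat : ℕ) : ℚ) = q.num := by
    exact_mod_cast Int.toNat_of_nonneg (Rat.num_nonneg.mpr hq)
  rw [hnum, Rat.num_div_den] at hn
  exact ⟨n, hn, fun m hm => s_injective hs0 hs _ m n rfl (hm.trans hn.symm)⟩
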